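/- Fix d ≥ 2. Call a tuple (a, b, q) with a, b ∈ ℝ^d and q : {0,1}^d → ℝ feasible if: 0 ≤ a_i < b_i ≤ 1 for all i; 0 ≤ q_J − q_I ≤ b_ℓ − a_ℓ for all ℓ = 1,…,d and all I ∼_ℓ J; and max{0, G_d(x_I)} ≤ q_I ≤ H_d(x_I) for all I ∈ {0,1}^d, where x_I is the point with (x_I)_k = a_k if I_k = 0 and (x_I)_k = b_k if I_k = 1. Set V(q) = Σ_{I ∈ {0,1}^d} (−1)^{d−‖I‖₁} q_I. Suppose (a*, b*, q*) is feasible, V(q*) ≥ V(q) for every feasible (a, b, q), and b*_i = 1 for all i. Then V(q*) is the maximal Q-volume over all d-quasi-copulas and all d-boxes: V_Q(B) ≤ V(q*) for every d-quasi-copula Q and every d-box B ⊆ [0,1]^d, and there exist a d-quasi-copula Q and a d-box B ⊆ [0,1]^d with V_Q(B) = V(q*). -/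

import Mathlib

/-!
A quasi-copula is governed by the asymmetric distance `ρ(u, v) = ∑ i, max (u i - v i) 0`: being
nondecreasing and `1`-Lipschitz in each variable amounts to `Q u ≤ Q v + ρ(u, v)`.

Upper bound: the values of a quasi-copula at the vertices of a box are feasible for the linear
program (`feasible_of_quasiCopula`), so every volume is at most the optimal value.

Attainment: any feasible `(a, b, q)` is the restriction of a quasi-copula. The witness is the
largest function on the cube satisfying the `ρ`-inequality, equal to `q I` at `x_I` and to `0` on
the faces `u i = 0`, namely `Q u = min (min_i u i) (min_I (q I + ρ(u, x_I)))`. The edge constraints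
of the program give `q J ≤ q I + ρ(x_J, x_I)` (`le_add_rho`), which together with `q J ≤ H_d(x_J)`
makes `Q` interpolate `q`; the lower bound `G_d(x_I) ≤ q I` is exactly what keeps
`Q (1, …, 1, t, 1, …, 1)` from dropping below `t`. Hence the box of the optimal solution itself
carries the maximal volume.
-/

namespace QC

/-- A point lies in the unit cube `[0,1]^d`. -/
def InCube {d : ℕ} (u : Fin d → ℝ) : Prop := ∀ i, u i ∈ Set.Icc (0:ℝ) 1

/-- A `d`-quasi-copula: boundary conditions, monotonicity in each variable,
and the `ℓ¹`-Lipschitz condition, on the unit cube. -/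
structure IsQuasiCopula (d : ℕ) (Q : (Fin d → ℝ) → ℝ) : Prop where
  mem : ∀ u, InCube u → Q u ∈ Set.Icc (0:ℝ) 1
  bc0 : ∀ u, InCube u → (∃ i, u i = 0) → Q u = 0
  bc1 : ∀ (i : Fin d), ∀ t ∈ Set.Icc (0:ℝ) 1,
      Q (fun j => if j = i then t else 1) = t
  mono : ∀ (i : Fin d) (u v : Fin d → ℝ), InCube u → InCube v →
      (∀ j, j ≠ i → u j = v j) → u i ≤ v i → Q u ≤ Q v
  lip : ∀ u v, InCube u → InCube v → |Q u - Q v| ≤ ∑ i, |u i - v i|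

/-- `‖I‖₁` for a multi-index `I ∈ {0,1}^d`. -/
def normOne {d : ℕ} (I : Fin d → Bool) : ℕ :=
  (Finset.univ.filter fun k => I k = true).card

/-- The vertex `x_I` of the box `Π [a_i, b_i]`. -/
def vertex {d : ℕ} (a b : Fin d → ℝ) (I : Fin d → Bool) : Fin d → ℝ :=
  fun k => if I k then b k else a k

/-- The `Q`-volume of the box `Π [a_i, b_i]`. -/
def boxVolume {d : ℕ} (Q : (Fin d → ℝ) → ℝ) (a b : Fin d → ℝ) : ℝ :=
  ∑ I : Fin d → Bool, (-1 : ℝ) ^ (d - normOne I) * Q (vertex a b I)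

/-- `Π [a_i, b_i]` is a `d`-box inside `[0,1]^d` with `a_i < b_i`. -/
def IsBox {d : ℕ} (a b : Fin d → ℝ) : Prop :=
  ∀ i, 0 ≤ a i ∧ a i < b i ∧ b i ≤ 1

/-- `G_d(x) = Σ x_i - d + 1`. -/
def Gd {d : ℕ} (x : Fin d → ℝ) : ℝ := (∑ i, x i) - d + 1

/-- `H_d(x) = min { x_1, …, x_d }`. -/
noncomputable def Hd {d : ℕ} (x : Fin d → ℝ) : ℝ := ⨅ i, x i

/-- `I ∼_ℓ J` for multi-indices in `{0,1}^d`: `J - I = e^(ℓ)`. -/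
def Adj2 {d : ℕ} (I J : Fin d → Bool) (ℓ : Fin d) : Prop :=
  I ℓ = false ∧ J ℓ = true ∧ ∀ k, k ≠ ℓ → I k = J k

/-- The grid point `x_I ∈ Π {a_i, 1}` for `I ∈ {0,1}^d`. -/
def xI2 {d : ℕ} (a : Fin d → ℝ) (I : Fin d → Bool) : Fin d → ℝ :=
  fun k => if I k then 1 else a k

/-- The grid point `x_I ∈ Π {a_i, b_i, 1}` for `I ∈ {0,1,2}^d`. -/
def xI3 {d : ℕ} (a b : Fin d → ℝ) (I : Fin d → Fin 3) : Fin d → ℝ :=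
  fun k => if I k = 0 then a k else if I k = 1 then b k else 1

/-- `I ∼_ℓ J` for multi-indices in `{0,1,2}^d`: `J - I = e^(ℓ)`. -/
def Adj3 {d : ℕ} (I J : Fin d → Fin 3) (ℓ : Fin d) : Prop :=
  ((J ℓ : ℕ) = (I ℓ : ℕ) + 1) ∧ ∀ k, k ≠ ℓ → I k = J k

/-- The extended domain `D^ext = Π {a_i,1} ∪ ⋃ L_i`, where
`L_i = { x ∈ [0,1]^d : x_i = 0 }`. -/
def Dext2 {d : ℕ} (a : Fin d → ℝ) (x : Fin d → ℝ) : Prop :=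
  (∃ I : Fin d → Bool, x = xI2 a I) ∨ (InCube x ∧ ∃ i, x i = 0)

/-- The extended domain `D^ext = Π {a_i,b_i,1} ∪ ⋃ L_i`. -/
def Dext3 {d : ℕ} (a b : Fin d → ℝ) (x : Fin d → ℝ) : Prop :=
  (∃ I : Fin d → Fin 3, x = xI3 a b I) ∨ (InCube x ∧ ∃ i, x i = 0)

/-- Feasibility for the linear programs (3.1)/(3.4) on the `2^d` grid. -/
def Feasible2 {d : ℕ} (a b : Fin d → ℝ) (q : (Fin d → Bool) → ℝ) : Prop :=
  (∀ i, 0 ≤ a i ∧ a i < b i ∧ b i ≤ 1) ∧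
  (∀ (ℓ : Fin d) (I J : Fin d → Bool), Adj2 I J ℓ →
      0 ≤ q J - q I ∧ q J - q I ≤ b ℓ - a ℓ) ∧
  (∀ I, max 0 (Gd (vertex a b I)) ≤ q I ∧ q I ≤ Hd (vertex a b I))

/-- The objective `V(q) = Σ_{I ∈ {0,1}^d} (-1)^(d-‖I‖₁) q_I`. -/
def Vq {d : ℕ} (q : (Fin d → Bool) → ℝ) : ℝ :=
  ∑ I : Fin d → Bool, (-1 : ℝ) ^ (d - normOne I) * q I

/-- Feasibility for the linear program (3.3) on the `3^d` grid. -/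
def Feasible3 {d : ℕ} (a b : Fin d → ℝ) (q : (Fin d → Fin 3) → ℝ) : Prop :=
  (∀ i, 0 ≤ a i ∧ a i < b i ∧ b i ≤ 1) ∧
  (∀ (ℓ : Fin d) (I J : Fin d → Fin 3), Adj3 I J ℓ → J ℓ = 1 →
      0 ≤ q J - q I ∧ q J - q I ≤ b ℓ - a ℓ) ∧
  (∀ (ℓ : Fin d) (I J : Fin d → Fin 3), Adj3 I J ℓ → J ℓ = 2 →
      0 ≤ q J - q I ∧ q J - q I ≤ 1 - b ℓ) ∧
  (∀ I, max 0 (Gd (xI3 a b I)) ≤ q I ∧ q I ≤ Hd (xI3 a b I))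

/-- The objective `V(q)` for the `3^d` grid: the sum runs over multi-indices
with entries in `{0,1}` only. -/
def Vq3 {d : ℕ} (q : (Fin d → Fin 3) → ℝ) : ℝ :=
  ∑ I : Fin d → Bool, (-1 : ℝ) ^ (d - normOne I) * q (fun k => if I k then 1 else 0)

/-- A point of a box all of whose coordinates are endpoints. -/
def IsVertexPoint {d : ℕ} (a b : Fin d → ℝ) (u : Fin d → ℝ) : Prop :=
  ∀ i, u i = a i ∨ u i = b i

/-- A point lies in the box `Π [a_i, b_i]`. -/
def InBox {d : ℕ} (a b : Fin d → ℝ) (u : Fin d → ℝ) : Prop :=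
  ∀ i, u i ∈ Set.Icc (a i) (b i)

/-- `F` is multilinear on the box `Π [a_i, b_i]`: affine separately in each
variable (on the box). -/
def MultilinearOnBox {d : ℕ} (a b : Fin d → ℝ) (F : (Fin d → ℝ) → ℝ) : Prop :=
  ∀ (i : Fin d) (u : Fin d → ℝ), InBox a b u →
    ∃ c e : ℝ, ∀ t ∈ Set.Icc (a i) (b i), F (Function.update u i t) = c * t + e

/-- The asymmetric `ℓ¹` distance `∑ i, (u i - v i)⁺`, which vanishes when `u ≤ v`. -/
noncomputable def rho {d : ℕ} (u v : Fin d → ℝ) : ℝ := ∑ i, max (u i - v i) 0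

lemma rho_nonneg {d : ℕ} (u v : Fin d → ℝ) : 0 ≤ rho u v :=
  Finset.sum_nonneg fun _ _ => le_max_right _ _

lemma rho_self {d : ℕ} (u : Fin d → ℝ) : rho u u = 0 := by simp [rho]

lemma rho_triangle {d : ℕ} (u v w : Fin d → ℝ) : rho u w ≤ rho u v + rho v w := by
  unfold rho
  rw [← Finset.sum_add_distrib]
  refine Finset.sum_le_sum fun i _ => max_le ?_ ?_
  · linarith [le_max_left (u i - v i) 0, le_max_left (v i - w i) 0]
  · linarith [le_max_right (u i - v i) 0, le_max_right (v i - w i) 0]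

lemma rho_le_sum_abs {d : ℕ} (u v : Fin d → ℝ) : rho u v ≤ ∑ i, |u i - v i| :=
  Finset.sum_le_sum fun _ _ => max_le (le_abs_self _) (abs_nonneg _)

lemma sub_le_rho {d : ℕ} (u v : Fin d → ℝ) (i : Fin d) : u i - v i ≤ rho u v :=
  (le_max_left _ _).trans <|
    Finset.single_le_sum (f := fun i => max (u i - v i) 0) (fun _ _ => le_max_right _ _)
      (Finset.mem_univ i)

lemma sum_sub_le_rho {d : ℕ} (u v : Fin d → ℝ) : ∑ i, (u i - v i) ≤ rho u v :=
  Finset.sum_le_sum fun _ _ => le_max_left _ _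

lemma Hd_le {d : ℕ} (u : Fin d → ℝ) (i : Fin d) : Hd u ≤ u i :=
  ciInf_le (Set.finite_range u).bddBelow i

/-- The edge constraints of the linear program, summed along a path in the cube that changes the
coordinates in `s` one at a time. -/
lemma le_add_rho_aux {d : ℕ} {a b : Fin d → ℝ} {q : (Fin d → Bool) → ℝ} (h : Feasible2 a b q)
    (I : Fin d → Bool) (s : Finset (Fin d)) : ∀ J : Fin d → Bool, (∀ k, k ∉ s → J k = I k) →
      q J ≤ q I + ∑ i ∈ s, max (vertex a b J i - vertex a b I i) 0 := by
  induction s using Finset.induction_on with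
  | empty =>
    intro J hJ
    have : J = I := funext fun k => hJ k (Finset.notMem_empty k)
    simp [this]
  | insert i s hi ih =>
    intro J hJ
    have h1 := ih (Function.update J i (I i)) fun k hk => by
      by_cases hki : k = i
      · subst hki; simp
      · simpa [hki] using hJ k (by simp [hki, hk])
    have h2 : ∑ k ∈ s, max (vertex a b (Function.update J i (I i)) k - vertex a b I k) 0
        = ∑ k ∈ s, max (vertex a b J k - vertex a b I k) 0 := by
      refine Finset.sum_congr rfl fun k hk => ?_
      have hki : k ≠ i := fun e => hi (e ▸ hk)
      simp [vertex, hki]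
    have h3 : q J ≤ q (Function.update J i (I i))
        + max (vertex a b J i - vertex a b I i) 0 := by
      rcases hJi : J i <;> rcases hIi : I i
      · rw [← hJi, Function.update_eq_self]
        linarith [le_max_right (vertex a b J i - vertex a b I i) 0]
      · have := (h.2.1 i J (Function.update J i true)
          ⟨hJi, by simp, fun k hk => by simp [hk]⟩).1
        linarith [le_max_right (vertex a b J i - vertex a b I i) 0]
      · have := (h.2.1 i (Function.update J i false) J
          ⟨by simp, hJi, fun k hk => by simp [hk]⟩).2
        have e : vertex a b J i - vertex a b I i = b i - a i := by simp [vertex, hJi, hIi]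
        linarith [le_max_left (vertex a b J i - vertex a b I i) 0]
      · rw [← hJi, Function.update_eq_self]
        linarith [le_max_right (vertex a b J i - vertex a b I i) 0]
    rw [Finset.sum_insert hi]
    linarith

lemma le_add_rho {d : ℕ} {a b : Fin d → ℝ} {q : (Fin d → Bool) → ℝ} (h : Feasible2 a b q)
    (I J : Fin d → Bool) : q J ≤ q I + rho (vertex a b J) (vertex a b I) :=
  le_add_rho_aux h I Finset.univ J (by simp)

/-- On the unit cube, the largest function that satisfies the `ρ`-inequality, is at most `q I` at
the vertex `x_I`, and is at most `0` on the faces `u i = 0`. -/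
noncomputable def ext {d : ℕ} (a b : Fin d → ℝ) (q : (Fin d → Bool) → ℝ) (u : Fin d → ℝ) : ℝ :=
  min (Hd u) (⨅ I, (q I + rho u (vertex a b I)))

lemma ext_le_coord {d : ℕ} (a b : Fin d → ℝ) (q : (Fin d → Bool) → ℝ) (u : Fin d → ℝ)
    (i : Fin d) : ext a b q u ≤ u i := (min_le_left _ _).trans (Hd_le u i)

lemma ext_le_vertex {d : ℕ} (a b : Fin d → ℝ) (q : (Fin d → Bool) → ℝ) (u : Fin d → ℝ)
    (I : Fin d → Bool) : ext a b q u ≤ q I + rho u (vertex a b I) :=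
  (min_le_right _ _).trans (ciInf_le (Set.finite_range _).bddBelow I)

lemma le_ext {d : ℕ} [Nonempty (Fin d)] {a b : Fin d → ℝ} {q : (Fin d → Bool) → ℝ}
    {u : Fin d → ℝ} {c : ℝ} (h1 : ∀ i, c ≤ u i)
    (h2 : ∀ I, c ≤ q I + rho u (vertex a b I)) : c ≤ ext a b q u :=
  le_min (le_ciInf h1) (le_ciInf h2)

lemma ext_le_add_rho {d : ℕ} [Nonempty (Fin d)] (a b : Fin d → ℝ) (q : (Fin d → Bool) → ℝ)
    (u v : Fin d → ℝ) : ext a b q u ≤ ext a b q v + rho u v := by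
  rw [← sub_le_iff_le_add]
  refine le_ext (fun i => ?_) fun I => ?_
  · linarith [ext_le_coord a b q u i, sub_le_rho u v i]
  · linarith [ext_le_vertex a b q u I, rho_triangle u v (vertex a b I)]

lemma ext_vertex {d : ℕ} [Nonempty (Fin d)] {a b : Fin d → ℝ} {q : (Fin d → Bool) → ℝ}
    (h : Feasible2 a b q) (J : Fin d → Bool) : ext a b q (vertex a b J) = q J := by
  refine le_antisymm ?_ (le_ext (fun i => ?_) fun I => le_add_rho h I J)
  · simpa [rho_self] using ext_le_vertex a b q (vertex a b J) J
  · exact (h.2.2 J).2.trans (Hd_le _ i)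

lemma isQuasiCopula_ext {d : ℕ} [Nonempty (Fin d)] {a b : Fin d → ℝ} {q : (Fin d → Bool) → ℝ}
    (h : Feasible2 a b q) : IsQuasiCopula d (ext a b q) := by
  have hq0 : ∀ I, 0 ≤ q I := fun I => (le_max_left _ _).trans (h.2.2 I).1
  have h0 : ∀ u, InCube u → 0 ≤ ext a b q u := fun u hu =>
    le_ext (fun i => (hu i).1) fun I => add_nonneg (hq0 I) (rho_nonneg _ _)
  refine ⟨fun u hu => ⟨h0 u hu, ?_⟩, ?_, ?_, ?_, ?_⟩
  · exact (ext_le_coord a b q u (Classical.arbitrary _)).trans (hu _).2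
  · rintro u hu ⟨i, hi⟩
    exact le_antisymm (hi ▸ ext_le_coord a b q u i) (h0 u hu)
  · intro i t ht
    refine le_antisymm ?_ (le_ext (fun j => ?_) fun I => ?_)
    · simpa using ext_le_coord a b q (fun j => if j = i then t else 1) i
    · split_ifs
      exacts [le_rfl, ht.2]
    · -- `∑ (u j - x_I j) = t + (d - 1) - ∑ x_I j = t - G_d(x_I)` at `u = (1, …, t, …, 1)`.
      have h1 := sum_sub_le_rho (fun j => if j = i then t else 1) (vertex a b I)
      have h2 : Gd (vertex a b I) ≤ q I := (le_max_right _ _).trans (h.2.2 I).1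
      have h3 : ∑ j : Fin d, (if j = i then t else 1) = t + d - 1 := by
        have : ∀ j : Fin d, (if j = i then t else 1) = (if j = i then t - 1 else 0) + 1 := by
          intro j; split_ifs <;> ring
        simp only [this, Finset.sum_add_distrib]
        simp
        ring
      rw [Finset.sum_sub_distrib, h3] at h1
      unfold Gd at h2
      linarith
  · intro i u v _ _ hne hle
    have hr : rho u v = 0 := Finset.sum_eq_zero fun j _ => by
      refine max_eq_right (sub_nonpos.2 ?_)
      by_cases hj : j = i
      · exact hj ▸ hle
      · exact (hne j hj).le
    linarith [ext_le_add_rho a b q u v]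
  · intro u v _ _
    have h1 := (ext_le_add_rho a b q u v).trans (add_le_add_right (rho_le_sum_abs u v) _)
    have h2 := (ext_le_add_rho a b q v u).trans (add_le_add_right (rho_le_sum_abs v u) _)
    simp only [abs_sub_comm (v _)] at h2
    rw [abs_sub_le_iff]
    constructor <;> linarith

lemma inCube_vertex {d : ℕ} {a b : Fin d → ℝ} (h : IsBox a b) (I : Fin d → Bool) :
    InCube (vertex a b I) := by
  intro i
  obtain ⟨h1, h2, h3⟩ := h i
  unfold vertex
  split_ifs
  · exact ⟨by linarith, h3⟩
  · exact ⟨h1, by linarith⟩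

/-- The Fréchet–Hoeffding bounds `G_d ≤ Q ≤ H_d`, `0 ≤ Q` for a quasi-copula, and its
behaviour along the edges of a box, are the constraints of the linear program. -/
lemma feasible_of_quasiCopula {d : ℕ} [Nonempty (Fin d)] {Q : (Fin d → ℝ) → ℝ}
    (hQ : IsQuasiCopula d Q) {a b : Fin d → ℝ} (h : IsBox a b) :
    Feasible2 a b fun I => Q (vertex a b I) := by
  refine ⟨h, fun l I J hIJ => ⟨?_, ?_⟩, fun I => ⟨max_le ?_ ?_, ?_⟩⟩
  · obtain ⟨h1, h2, h3⟩ := hIJ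
    refine sub_nonneg.2 (hQ.mono l _ _ (inCube_vertex h I) (inCube_vertex h J)
      (fun j hj => by simp [vertex, h3 j hj]) ?_)
    simpa [vertex, h1, h2] using (h l).2.1.le
  · obtain ⟨h1, h2, h3⟩ := hIJ
    refine (le_abs_self _).trans ((hQ.lip _ _ (inCube_vertex h J) (inCube_vertex h I)).trans ?_)
    rw [Finset.sum_eq_single l (fun j _ hj => by simp [vertex, h3 j hj]) (by simp)]
    simp [vertex, h1, h2, abs_of_nonneg (sub_nonneg.2 (h l).2.1.le)]
  · exact (hQ.mem _ (inCube_vertex h I)).1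
  · -- Lipschitz comparison with the corner `(1, …, 1)`, where `Q` takes the value `1`.
    have hx := inCube_vertex h I
    have h1 : Q (fun _ => 1) = 1 := by
      simpa using hQ.bc1 (Classical.arbitrary _) 1 (by simp)
    have h2 := (le_abs_self _).trans
      (hQ.lip (fun _ => 1) (vertex a b I) (fun _ => by simp) hx)
    have h3 : ∑ i, |1 - vertex a b I i| = d - ∑ i, vertex a b I i := by
      rw [Finset.sum_congr rfl fun i _ => abs_of_nonneg (sub_nonneg.2 (hx i).2)]
      simp
    rw [h1, h3] at h2
    unfold Gd
    linarith
  · -- Lipschitz comparison with the projection to the face `u i = 0`, where `Q` vanishes.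
    refine le_ciInf fun i => ?_
    have hx := inCube_vertex h I
    have hy : InCube (Function.update (vertex a b I) i 0) := by
      intro j
      by_cases hj : j = i
      · subst hj; simp
      · simpa [hj] using hx j
    have h2 := (le_abs_self _).trans (hQ.lip _ _ hx hy)
    rw [hQ.bc0 _ hy ⟨i, by simp⟩,
      Finset.sum_eq_single i (fun j _ hj => by simp [hj]) (by simp)] at h2
    simpa [abs_of_nonneg (hx i).1] using h2

/-- if an optimal solution to the maximization linear program
has `b*_i = 1` for all `i`, then its value is the maximal `Q`-volume over all
`d`-quasi-copulas and all `d`-boxes. -/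
theorem LP_optimal_is_maximal_volume
    (d : ℕ) (hd : 2 ≤ d) (a b : Fin d → ℝ) (q : (Fin d → Bool) → ℝ)
    (hfeas : Feasible2 a b q)
    (hopt : ∀ (a' b' : Fin d → ℝ) (q' : (Fin d → Bool) → ℝ),
        Feasible2 a' b' q' → Vq q' ≤ Vq q)
    (hb : ∀ i, b i = 1) :
    (∀ (Q : (Fin d → ℝ) → ℝ) (a' b' : Fin d → ℝ), IsQuasiCopula d Q →
        IsBox a' b' → boxVolume Q a' b' ≤ Vq q) ∧
    (∃ (Q : (Fin d → ℝ) → ℝ) (a' b' : Fin d → ℝ), IsQuasiCopula d Q ∧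
        IsBox a' b' ∧ boxVolume Q a' b' = Vq q) := by
  have : Nonempty (Fin d) := ⟨⟨0, by omega⟩⟩
  refine ⟨fun Q a' b' hQ hB => hopt a' b' _ (feasible_of_quasiCopula hQ hB),
    ext a b q, a, b, isQuasiCopula_ext hfeas, hfeas.1, ?_⟩
  simp only [boxVolume, Vq, ext_vertex hfeas]

end QC
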